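/- arXiv:2605.09892 — 4 statements merged into one kernel-verified Lean document; each statement's English description precedes it below -/
import Mathlib

section
/- (Proposition 2 of the paper, closed-form conditional outage.) Let m > 0, q > 0 and ν > 0. Then q · ∫₀¹ γ(m, mν/u) · u^(q−1) du = γ(m, mν) + (mν)^q · Γ(m−q, mν), where γ(a,x) = ∫₀ˣ t^(a−1) e^(−t) dt is the lower incomplete gamma function and Γ(a,x) = ∫ₓ^∞ t^(a−1) e^(−t) dt is the generalized upper incomplete gamma function. Equivalently, dividing by Γ(m), the conditional outage probability P_out = (q/Γ(m)) ∫₀¹ γ(m, mν/u) u^(q−1) du equals [γ(m, mν) + (mν)^q Γ(m−q, mν)] / Γ(m). -/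
open MeasureTheory Set Real

/-- The lower incomplete gamma function `γ(a, x) = ∫₀ˣ t^(a-1) e^(-t) dt`. -/
noncomputable def lowerIncGamma (a x : ℝ) : ℝ :=
  ∫ t in (0:ℝ)..x, t ^ (a - 1) * Real.exp (-t)

/-- The generalized upper incomplete gamma function
`Γ(a, x) = ∫ₓ^∞ t^(a-1) e^(-t) dt`, finite for all real `a` whenever `x > 0`. -/
noncomputable def upperIncGamma (a x : ℝ) : ℝ :=
  ∫ t in Ioi x, t ^ (a - 1) * Real.exp (-t)

/-!
Let `c = m * ν`. Writing `γ(m, c / u)` as an integral over `0 < t ≤ c / u` turns the left-hand side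
into an integral over the region `u * t ≤ c`. Integrating over `u` first gives the factor
`(min 1 (c / t)) ^ q / q`, which is `1 / q` for `t ≤ c` and `c ^ q * t ^ (-q) / q` for `t > c`. The
first range produces the lower incomplete gamma function, the second one the upper incomplete gamma
function with its parameter lowered by `q`.
-/

theorem setIntegral_Ioc_rpow_sub_one {q b : ℝ} (hq : 0 < q) (hb : 0 ≤ b) :
    ∫ u in Ioc 0 b, u ^ (q - 1) = b ^ q / q := by
  rw [← intervalIntegral.integral_of_le hb, integral_rpow (Or.inl (by linarith)), sub_add_cancel,
    zero_rpow hq.ne', sub_zero]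

section

variable {E : Type*} [NormedAddCommGroup E] [NormedSpace ℝ E]

theorem setIntegral_smul_setIntegral_Ioc_div_swap [CompleteSpace E] {μ ν : Measure ℝ} [SFinite μ]
    [SFinite ν] {g : ℝ → ℝ} {f : ℝ → E} (hg : IntegrableOn g (Ioi 0) μ)
    (hf : IntegrableOn f (Ioi 0) ν) (c : ℝ) :
    ∫ u in Ioi 0, g u • ∫ t in Ioc 0 (c / u), f t ∂ν ∂μ =
      ∫ t in Ioi 0, (∫ u in Ioc 0 (c / t), g u ∂μ) • f t ∂ν := by
  let region : Set (ℝ × ℝ) := {p | p.1 * p.2 ≤ c}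
  let F : ℝ × ℝ → E := region.indicator fun p ↦ g p.1 • f p.2
  have F_integrable : Integrable F ((μ.restrict (Ioi 0)).prod (ν.restrict (Ioi 0))) :=
    (hg.smul_prod hf).indicator (measurableSet_le (by fun_prop) (by fun_prop))
  have integral_F_right (u : ℝ) (hu : u ∈ Ioi 0) :
      g u • ∫ t in Ioc 0 (c / u), f t ∂ν = ∫ t in Ioi 0, F (u, t) ∂ν := by
    have F_eq : (fun t ↦ F (u, t)) = (Iic (c / u)).indicator fun t ↦ g u • f t := by
      ext t
      simp only [F, region, indicator, mem_ofPred_eq, mem_Iic, le_div_iff₀ (mem_Ioi.1 hu),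
        mul_comm u t]
    rw [F_eq, setIntegral_indicator measurableSet_Iic, Ioi_inter_Iic, integral_smul]
  have integral_F_left (t : ℝ) (ht : t ∈ Ioi 0) :
      ∫ u in Ioi 0, F (u, t) ∂μ = (∫ u in Ioc 0 (c / t), g u ∂μ) • f t := by
    have F_eq : (fun u ↦ F (u, t)) = (Iic (c / t)).indicator fun u ↦ g u • f t := by
      ext u
      simp only [F, region, indicator, mem_ofPred_eq, mem_Iic, le_div_iff₀ (mem_Ioi.1 ht)]
    rw [F_eq, setIntegral_indicator measurableSet_Iic, Ioi_inter_Iic, integral_smul_const]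
  calc
    _ = ∫ u in Ioi 0, ∫ t in Ioi 0, F (u, t) ∂ν ∂μ :=
      setIntegral_congr_fun measurableSet_Ioi integral_F_right
    _ = ∫ t in Ioi 0, ∫ u in Ioi 0, F (u, t) ∂μ ∂ν := integral_integral_swap F_integrable
    _ = _ := setIntegral_congr_fun measurableSet_Ioi integral_F_left

theorem setIntegral_min_one_div_rpow_smul {q c : ℝ} (hq : 0 ≤ q) (hc : 0 < c) {f : ℝ → E}
    (hf : IntegrableOn f (Ioi 0)) :
    ∫ t in Ioi 0, min 1 (c / t) ^ q • f t =
      (∫ t in Ioc 0 c, f t) + c ^ q • ∫ t in Ioi c, t ^ (-q) • f t := by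
  have integrable : IntegrableOn (fun t ↦ min 1 (c / t) ^ q • f t) (Ioi 0) := by
    refine hf.bdd_smul 1 (Measurable.aestronglyMeasurable (by fun_prop)) ?_
    filter_upwards [ae_restrict_mem measurableSet_Ioi] with t (ht : 0 < t)
    have min_nonneg : 0 ≤ min 1 (c / t) := by positivity
    rw [Real.norm_of_nonneg (rpow_nonneg min_nonneg q)]
    exact rpow_le_one min_nonneg (min_le_left _ _) hq
  have eq_of_le (t : ℝ) (ht : t ∈ Ioc 0 c) : min 1 (c / t) ^ q • f t = f t := by
    rw [min_eq_left ((one_le_div ht.1).2 ht.2), one_rpow, one_smul]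
  have eq_of_gt (t : ℝ) (ht : t ∈ Ioi c) :
      min 1 (c / t) ^ q • f t = c ^ q • t ^ (-q) • f t := by
    have ht0 : 0 < t := hc.trans ht
    rw [min_eq_right ((div_le_one ht0).2 (mem_Ioi.1 ht).le), div_rpow hc.le ht0.le,
      rpow_neg ht0.le, smul_smul, div_eq_mul_inv]
  rw [← Ioc_union_Ioi_eq_Ioi hc.le,
    setIntegral_union (Ioc_disjoint_Ioi le_rfl) measurableSet_Ioi
      (integrable.mono_set Ioc_subset_Ioi_self) (integrable.mono_set (Ioi_subset_Ioi hc.le)),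
    setIntegral_congr_fun measurableSet_Ioc eq_of_le,
    setIntegral_congr_fun measurableSet_Ioi eq_of_gt, integral_smul]

theorem smul_setIntegral_rpow_smul_setIntegral_Ioc_div [CompleteSpace E] {q c : ℝ} (hq : 0 < q)
    (hc : 0 < c) {f : ℝ → E} (hf : IntegrableOn f (Ioi 0)) :
    q • ∫ u in Ioc 0 1, u ^ (q - 1) • ∫ t in Ioc 0 (c / u), f t =
      (∫ t in Ioc 0 c, f t) + c ^ q • ∫ t in Ioi c, t ^ (-q) • f t := by
  have restrict_Ioi : (volume.restrict (Ioc (0 : ℝ) 1)).restrict (Ioi 0) =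
      volume.restrict (Ioc 0 1) := by
    rw [Measure.restrict_restrict measurableSet_Ioi, inter_eq_right.2 Ioc_subset_Ioi_self]
  have power_integrable :
      IntegrableOn (fun u : ℝ ↦ u ^ (q - 1)) (Ioi 0) (volume.restrict (Ioc 0 1)) := by
    rw [IntegrableOn, restrict_Ioi]
    exact (intervalIntegral.intervalIntegrable_rpow' (by linarith)).1
  have integral_power (t : ℝ) (ht : t ∈ Ioi 0) :
      ∫ u in Ioc 0 (c / t), u ^ (q - 1) ∂volume.restrict (Ioc 0 1) = min 1 (c / t) ^ q / q := by
    rw [Measure.restrict_restrict measurableSet_Ioc, Ioc_inter_Ioc, max_self, min_comm,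
      setIntegral_Ioc_rpow_sub_one hq (le_min zero_le_one (div_pos hc ht).le)]
  have swap := setIntegral_smul_setIntegral_Ioc_div_swap power_integrable hf c
  rw [restrict_Ioi] at swap
  calc
    _ = q • ∫ t in Ioi 0, (min 1 (c / t) ^ q / q) • f t := by
      rw [swap]
      congr 1
      exact setIntegral_congr_fun measurableSet_Ioi fun t ht ↦ by simp only [integral_power t ht]
    _ = ∫ t in Ioi 0, min 1 (c / t) ^ q • f t := by
      simp only [← integral_smul, smul_smul, mul_div_cancel₀ _ hq.ne']
    _ = _ := setIntegral_min_one_div_rpow_smul hq.le hc hf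

end

theorem lowerIncGamma_eq_setIntegral (a : ℝ) {x : ℝ} (hx : 0 ≤ x) :
    lowerIncGamma a x = ∫ t in Ioc 0 x, t ^ (a - 1) * exp (-t) :=
  intervalIntegral.integral_of_le hx

theorem upperIncGamma_sub_eq_setIntegral (a q : ℝ) {x : ℝ} (hx : 0 ≤ x) :
    upperIncGamma (a - q) x = ∫ t in Ioi x, t ^ (-q) * (t ^ (a - 1) * exp (-t)) := by
  refine setIntegral_congr_fun measurableSet_Ioi fun t ht ↦ ?_
  simp only [← mul_assoc, ← rpow_add (hx.trans_lt ht)]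
  ring_nf

/-- Proposition 2 (closed-form conditional outage):
`q ∫₀¹ γ(m, mν/u) u^(q-1) du = γ(m, mν) + (mν)^q Γ(m-q, mν)`. -/
theorem conditional_outage_closed_form (m q ν : ℝ) (hm : 0 < m) (hq : 0 < q) (hν : 0 < ν) :
    q * ∫ u in Ioc (0:ℝ) 1, lowerIncGamma m (m * ν / u) * u ^ (q - 1) =
      lowerIncGamma m (m * ν) + (m * ν) ^ q * upperIncGamma (m - q) (m * ν) := by
  have hc : 0 < m * ν := mul_pos hm hν
  have density_integrable : IntegrableOn (fun t : ℝ ↦ t ^ (m - 1) * exp (-t)) (Ioi 0) := by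
    simpa only [mul_comm] using GammaIntegral_convergent hm
  have inner_integral (u : ℝ) (hu : u ∈ Ioc 0 1) :
      lowerIncGamma m (m * ν / u) * u ^ (q - 1) =
        u ^ (q - 1) * ∫ t in Ioc 0 (m * ν / u), t ^ (m - 1) * exp (-t) := by
    rw [lowerIncGamma_eq_setIntegral m (div_pos hc hu.1).le, mul_comm]
  rw [setIntegral_congr_fun measurableSet_Ioc inner_integral, lowerIncGamma_eq_setIntegral m hc.le,
    upperIncGamma_sub_eq_setIntegral m q hc.le]
  exact smul_setIntegral_rpow_smul_setIntegral_Ioc_div hq hc density_integrable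
end

section
/- Let α > 0 be real. Then, using the principal branch of the complex power, the quotient [Re((α + i·ξ)^(5/6)) − α^(5/6)] / ξ² tends to (5/72) · α^(−7/6) as ξ tends to 0 through nonzero values. -/
open Filter Real Topology

/-! On the vertical line `z = α + iξ` the increment of the holomorphic function `f z = z ^ p` is
`i ξ f' α`, which is purely imaginary because `f' α` is real, plus the second-order Taylor term
`-ξ² f'' α / 2`. So the real part has no linear term, and its quadratic coefficient is
`-f'' α / 2 = p (1 - p) / 2 · α ^ (p - 2)`. -/

open Asymptotics

section

variable {𝕜 E : Type*} [RCLike 𝕜] [NormedAddCommGroup E] [NormedSpace 𝕜 E] {f f' : 𝕜 → E} {a : 𝕜}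

theorem isLittleO_sub_pow_succ_of_hasDerivAt {n : ℕ} (hf : ∀ᶠ z in 𝓝 a, HasDerivAt f (f' z) z)
    (hf' : f' =o[𝓝 a] fun z => (z - a) ^ n) :
    (fun z => f z - f a) =o[𝓝 a] fun z => (z - a) ^ (n + 1) := by
  let : NormedSpace ℝ E := NormedSpace.restrictScalars ℝ 𝕜 E
  obtain ⟨r, hr, hball⟩ := Metric.eventually_nhds_iff_ball.mp hf
  have hnhds : 𝓝[Metric.ball a r] a = 𝓝 a :=
    Metric.isOpen_ball.nhdsWithin_eq (Metric.mem_ball_self hr)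
  have hfderiv_isLittleO : (fun z => ContinuousLinearMap.toSpanSingleton 𝕜 (f' z))
      =o[𝓝[Metric.ball a r] a] fun z => ‖z - a‖ ^ n := by
    rw [hnhds, ← isLittleO_norm_left]
    simpa [← norm_pow] using hf'.norm_norm
  have hincrement := (convex_ball a r).isLittleO_pow_succ (Metric.mem_ball_self hr)
    (fun z hz => (hball z hz).hasFDerivAt.hasFDerivWithinAt) hfderiv_isLittleO
  simpa only [hnhds, ← norm_pow, isLittleO_norm_right] using hincrement

theorem isLittleO_sub_taylor_two_of_hasDerivAt {f'' : E}
    (hf : ∀ᶠ z in 𝓝 a, HasDerivAt f (f' z) z) (hf' : HasDerivAt f' f'' a) :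
    (fun z => f z - f a - (z - a) • f' a - ((z - a) ^ 2 / 2) • f'') =o[𝓝 a]
      fun z => (z - a) ^ 2 := by
  have hremainder : ∀ᶠ z in 𝓝 a,
      HasDerivAt (fun z => f z - (z - a) • f' a - ((z - a) ^ 2 / 2) • f'')
        (f' z - f' a - (z - a) • f'') z := by
    filter_upwards [hf] with z hfz
    have hlinear : HasDerivAt (fun z => z - a) 1 z := (hasDerivAt_id z).sub_const a
    have hquadratic : HasDerivAt (fun z => (z - a) ^ 2 / 2) (z - a) z := by
      simpa using! (hlinear.pow 2).div_const 2
    simpa using! (hfz.sub (hlinear.smul_const (f' a))).sub (hquadratic.smul_const f'')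
  have hderiv_isLittleO : (fun z => f' z - f' a - (z - a) • f'') =o[𝓝 a]
      fun z => (z - a) ^ 1 := by
    simpa using hf'.isLittleO
  refine (isLittleO_sub_pow_succ_of_hasDerivAt hremainder hderiv_isLittleO).congr_left fun z => ?_
  simp only [sub_self, zero_smul, ne_eq, OfNat.ofNat_ne_zero, not_false_eq_true, zero_pow,
    zero_div, sub_zero]
  abel

end

theorem tendsto_re_add_mul_I_sub_div_sq {f f' : ℂ → ℂ} {f'' a : ℂ}
    (hf : ∀ᶠ z in 𝓝 a, HasDerivAt f (f' z) z) (hf' : HasDerivAt f' f'' a) :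
    Tendsto (fun ξ : ℝ => ((f (a + ξ * Complex.I)).re - (f a).re + ξ * (f' a).im) / ξ ^ 2)
      (𝓝[≠] 0) (𝓝 (-f''.re / 2)) := by
  have hline : Tendsto (fun ξ : ℝ => a + ξ * Complex.I) (𝓝[≠] 0) (𝓝 a) :=
    (Continuous.tendsto' (by fun_prop) 0 a (by simp)).mono_left nhdsWithin_le_nhds
  have htaylor := (isLittleO_sub_taylor_two_of_hasDerivAt hf hf').comp_tendsto hline
  have htaylor_re : Tendsto (fun ξ : ℝ => ((f (a + ξ * Complex.I) - f a - (ξ * Complex.I) * f' a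
      - (ξ * Complex.I) ^ 2 / 2 * f'') / (ξ * Complex.I) ^ 2).re) (𝓝[≠] 0) (𝓝 0) := by
    simpa [Function.comp_def] using! (Complex.continuous_re.tendsto 0).comp
      htaylor.tendsto_div_nhds_zero
  have hsq (ξ : ℝ) : (ξ * Complex.I) ^ 2 = (-ξ ^ 2 : ℝ) := by
    simp [mul_pow]
  have hlim := htaylor_re.const_sub (-f''.re / 2)
  rw [sub_zero] at hlim
  refine hlim.congr' ?_
  filter_upwards [self_mem_nhdsWithin] with ξ (hξ : ξ ≠ 0)
  have hre : (f (a + ξ * Complex.I) - f a - (ξ * Complex.I) * f' a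
      - (-ξ ^ 2 : ℝ) / 2 * f'').re
      = (f (a + ξ * Complex.I)).re - (f a).re + ξ * (f' a).im + ξ ^ 2 / 2 * f''.re := by
    simp [-Complex.ofReal_neg, -Complex.ofReal_pow, neg_div]
  rw [hsq, Complex.div_ofReal_re, hre]
  field_simp
  ring

theorem re_cpow_quadratic_limit_general (p α : ℝ) (hα : 0 < α) :
    Tendsto (fun ξ : ℝ => ((((α : ℂ) + ξ * Complex.I) ^ (p : ℂ)).re - α ^ p) / ξ ^ 2)
      (𝓝[≠] 0) (𝓝 (p * (1 - p) / 2 * α ^ (p - 2))) := by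
  have hderiv (c : ℂ) {z : ℂ} (hz : z ∈ Complex.slitPlane) :
      HasDerivAt (· ^ c) (c * z ^ (c - 1)) z :=
    (Complex.hasStrictDerivAt_cpow_const hz).hasDerivAt
  have hα_slit : (α : ℂ) ∈ Complex.slitPlane := Complex.ofReal_mem_slitPlane.mpr hα
  have hpow (q : ℝ) : (α : ℂ) ^ (q : ℂ) = (α ^ q : ℝ) := (Complex.ofReal_cpow hα.le q).symm
  have hfirst : (p : ℂ) * (α : ℂ) ^ ((p : ℂ) - 1) = (p * α ^ (p - 1) : ℝ) := by
    simp [← hpow]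
  have hsecond : (p : ℂ) * (((p : ℂ) - 1) * (α : ℂ) ^ ((p : ℂ) - 1 - 1)) =
      (p * (p - 1) * α ^ (p - 2) : ℝ) := by
    rw [sub_sub, one_add_one_eq_two]
    simp [← hpow, mul_assoc]
  have hlim := tendsto_re_add_mul_I_sub_div_sq
    ((Complex.isOpen_slitPlane.eventually_mem hα_slit).mono fun _ => hderiv p)
    ((hderiv (p - 1) hα_slit).const_mul (p : ℂ))
  rw [hfirst, hsecond, hpow] at hlim
  simp only [Complex.ofReal_re, Complex.ofReal_im, mul_zero, add_zero] at hlim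
  convert hlim using 2
  ring

/-- Limit form of Proposition 1:
`[Re((α + iξ)^(5/6)) - α^(5/6)] / ξ² → (5/72) α^(-7/6)` as `ξ → 0`, `ξ ≠ 0`
(principal branch of the complex power). -/
theorem re_cpow_quadratic_limit (α : ℝ) (hα : 0 < α) :
    Tendsto
      (fun ξ : ℝ =>
        ((((α : ℂ) + (ξ : ℂ) * Complex.I) ^ ((5 : ℂ) / 6)).re - α ^ ((5 : ℝ) / 6)) / ξ ^ 2)
      (nhdsWithin 0 {0}ᶜ)
      (nhds ((5 / 72) * α ^ (-(7 : ℝ) / 6))) := by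
  convert re_cpow_quadratic_limit_general (5 / 6) α hα using 2 <;> norm_num
end

section
/- Let m > 0, λ > 0, k > 0, ν > 0, and set q = λ/k. Let μₐ be the Gamma distribution on ℝ with shape m and rate m, and let μ_p be the pushforward of the exponential distribution with rate λ under the map x ↦ exp(−k·x). Then the product measure μₐ × μ_p assigns to the event {(x,u) : x·u < ν} the probability (1/Γ(m)) · [γ(m, m·ν) + (m·ν)^q · Γ(m−q, m·ν)], where γ(a,y) = ∫₀^y t^(a−1) e^(−t) dt is the lower incomplete gamma function and Γ(a,y) = ∫_y^∞ t^(a−1) e^(−t) dt is the generalized upper incomplete gamma function (with the convention that the probability is capped at 1, or equivalently assuming ν is such that the expression is ≤ 1; in fact the expression always lies in [0,1]). -/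
open MeasureTheory ProbabilityTheory Real Set

/-!
Conditioning on the gain `x`, the outage event is `h_p < ν / x`, of probability
`min 1 (ν / x) ^ q` with `q = l / k`, because `h_p` has cumulative distribution function `c ^ q` on
`(0, 1]`. Hence the gains `x ≤ ν` contribute the Gamma distribution function at `ν`, the gains
`x > ν` contribute `ν ^ q` times the truncated moment of order `-q` of the Gamma distribution, and
the substitution `t = r * x` turns both into incomplete gamma functions.
-/

section IncompleteGamma

lemma integrableOn_rpow_mul_exp_neg_Ioi (s : ℝ) {y : ℝ} (hy : 0 < y) :
    IntegrableOn (fun t => t ^ s * Real.exp (-t)) (Ioi y) := by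
  refine integrable_of_isBigO_exp_neg one_half_pos ?_ ?_
  · exact (continuousOn_id.rpow_const fun _ ht => .inl (hy.trans_le ht).ne').mul (by fun_prop)
  · simpa only [mul_comm] using (Real.Gamma_integrand_isLittleO s).isBigO

lemma ofReal_upperIncGamma (a : ℝ) {y : ℝ} (hy : 0 < y) :
    ENNReal.ofReal (upperIncGamma a y) =
      ∫⁻ t in Ioi y, ENNReal.ofReal (t ^ (a - 1) * Real.exp (-t)) := by
  refine ofReal_integral_eq_lintegral_ofReal (integrableOn_rpow_mul_exp_neg_Ioi _ hy) ?_
  filter_upwards [ae_restrict_mem measurableSet_Ioi] with t ht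
  have : 0 < t := hy.trans ht
  positivity

lemma ofReal_lowerIncGamma {a y : ℝ} (ha : 0 < a) (hy : 0 ≤ y) :
    ENNReal.ofReal (lowerIncGamma a y) =
      ∫⁻ t in Ioc 0 y, ENNReal.ofReal (t ^ (a - 1) * Real.exp (-t)) := by
  have hint : IntegrableOn (fun t => t ^ (a - 1) * Real.exp (-t)) (Ioc 0 y) := by
    simpa only [mul_comm] using (Real.GammaIntegral_convergent ha).mono_set Ioc_subset_Ioi_self
  rw [lowerIncGamma, intervalIntegral.integral_of_le hy]
  refine ofReal_integral_eq_lintegral_ofReal hint ?_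
  filter_upwards [ae_restrict_mem measurableSet_Ioc] with t ht
  have : 0 < t := ht.1
  positivity

lemma lowerIncGamma_nonneg (a : ℝ) {y : ℝ} (hy : 0 ≤ y) : 0 ≤ lowerIncGamma a y :=
  intervalIntegral.integral_nonneg hy fun _ ht =>
    mul_nonneg (Real.rpow_nonneg ht.1 _) (Real.exp_pos _).le

lemma upperIncGamma_nonneg (a : ℝ) {y : ℝ} (hy : 0 ≤ y) : 0 ≤ upperIncGamma a y :=
  setIntegral_nonneg measurableSet_Ioi fun _ ht =>
    mul_nonneg (Real.rpow_nonneg (hy.trans ht.le) _) (Real.exp_pos _).le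

end IncompleteGamma

section GammaMeasure

lemma ae_pos_gammaMeasure (a r : ℝ) : ∀ᵐ x ∂gammaMeasure a r, 0 < x := by
  rw [gammaMeasure, ae_withDensity_iff (by unfold gammaPDF; fun_prop)]
  filter_upwards [Measure.ae_ne volume (0 : ℝ)] with x hx hpdf
  exact hx.lt_or_gt.resolve_left fun hneg => hpdf (gammaPDF_of_neg hneg)

variable {a r c : ℝ}

lemma gammaPDFReal_mul_rpow (hr : 0 < r) (s : ℝ) {x : ℝ} (hx : 0 < x) :
    gammaPDFReal a r x * x ^ s =
      r ^ (-s) / Real.Gamma a * (r * ((r * x) ^ (a + s - 1) * Real.exp (-(r * x)))) := by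
  have hr_pow : r ^ a = r ^ (-s) * (r * r ^ (a + s - 1)) := by
    rw [Real.rpow_sub_one hr.ne', mul_div_cancel₀ _ hr.ne', ← Real.rpow_add hr]
    ring_nf
  have hx_pow : x ^ (a + s - 1) = x ^ (a - 1) * x ^ s := by
    rw [← Real.rpow_add hx]
    ring_nf
  rw [gammaPDFReal, if_pos hx.le, Real.mul_rpow hr.le hx.le, hr_pow, hx_pow]
  ring

lemma setLIntegral_rpow_gammaMeasure (ha : 0 < a) (hr : 0 < r) (s : ℝ) {S : Set ℝ}
    (hS : MeasurableSet S) (hpos : S ⊆ Ioi 0) :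
    ∫⁻ x in S, ENNReal.ofReal (x ^ s) ∂gammaMeasure a r =
      ENNReal.ofReal (r ^ (-s) / Real.Gamma a) *
        ∫⁻ t in (r * ·) '' S, ENNReal.ofReal (t ^ (a + s - 1) * Real.exp (-t)) := by
  have hderiv (x : ℝ) (_ : x ∈ S) : HasDerivWithinAt (r * ·) r S x := by
    simpa using (hasDerivWithinAt_id x S).const_mul r
  have hconst : 0 ≤ r ^ (-s) / Real.Gamma a := by positivity
  rw [gammaMeasure, setLIntegral_withDensity_eq_setLIntegral_mul _
      (by unfold gammaPDF; fun_prop) (by fun_prop) hS,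
    lintegral_image_eq_lintegral_abs_deriv_mul hS hderiv (mul_right_injective₀ hr.ne').injOn,
    ← lintegral_const_mul' _ _ ENNReal.ofReal_ne_top]
  refine setLIntegral_congr_fun hS fun x hx => ?_
  simp only [Pi.mul_apply, gammaPDF, abs_of_pos hr]
  rw [← ENNReal.ofReal_mul (gammaPDFReal_nonneg ha hr x), gammaPDFReal_mul_rpow hr s (hpos hx),
    ENNReal.ofReal_mul hconst, ENNReal.ofReal_mul hr.le]

lemma gammaMeasure_Iic (ha : 0 < a) (hr : 0 < r) (hc : 0 ≤ c) :
    gammaMeasure a r (Iic c) =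
      ENNReal.ofReal (1 / Real.Gamma a * lowerIncGamma a (r * c)) := by
  have hIoc : gammaMeasure a r (Iic c) = gammaMeasure a r (Ioc 0 c) := by
    refine measure_congr ?_
    filter_upwards [ae_pos_gammaMeasure a r] with x hx
    exact propext (and_iff_right hx).symm
  rw [hIoc, ENNReal.ofReal_mul (by positivity), ofReal_lowerIncGamma ha (by positivity)]
  simpa [image_mul_left_Ioc hr] using
    setLIntegral_rpow_gammaMeasure ha hr 0 (measurableSet_Ioc (b := c)) Ioc_subset_Ioi_self

lemma setLIntegral_Ioi_rpow_gammaMeasure (ha : 0 < a) (hr : 0 < r) (s : ℝ) (hc : 0 < c) :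
    ∫⁻ x in Ioi c, ENNReal.ofReal (x ^ s) ∂gammaMeasure a r =
      ENNReal.ofReal (r ^ (-s) / Real.Gamma a * upperIncGamma (a + s) (r * c)) := by
  rw [setLIntegral_rpow_gammaMeasure ha hr s measurableSet_Ioi (Ioi_subset_Ioi hc.le),
    image_mul_left_Ioi hr, ENNReal.ofReal_mul (by positivity),
    ofReal_upperIncGamma _ (mul_pos hr hc)]

end GammaMeasure

section ExponentialLoss

variable {l k : ℝ}

lemma expMeasure_Ioi (hl : 0 < l) (x : ℝ) :
    expMeasure l (Ioi x) = ENNReal.ofReal (Real.exp (-(l * max 0 x))) := by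
  have := isProbabilityMeasure_expMeasure hl
  rw [← compl_Iic, ← ofReal_measureReal, probReal_compl_eq_one_sub measurableSet_Iic,
    ← cdf_eq_real, cdf_expMeasure_eq hl]
  congr 1
  split_ifs with hx
  · rw [max_eq_right hx, sub_sub_cancel]
  · simp [max_eq_left (not_le.mp hx).le]

lemma map_exp_neg_mul_expMeasure_Iio (hl : 0 < l) (hk : 0 < k) {c : ℝ} (hc : 0 < c) :
    Measure.map (fun x => Real.exp (-(k * x))) (expMeasure l) (Iio c) =
      ENNReal.ofReal (min 1 c ^ (l / k)) := by
  have hpre : (fun x => Real.exp (-(k * x))) ⁻¹' Iio c = Ioi (-Real.log c / k) := by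
    ext x
    rw [mem_preimage, mem_Iio, mem_Ioi, ← Real.lt_log_iff_exp_lt hc, neg_lt, div_lt_iff₀' hk]
  rw [Measure.map_apply (by fun_prop) measurableSet_Iio, hpre, expMeasure_Ioi hl]
  congr 1
  rcases le_total c 1 with hc1 | hc1
  · have hlog : 0 ≤ -Real.log c / k :=
      div_nonneg (neg_nonneg.mpr (Real.log_nonpos hc.le hc1)) hk.le
    rw [max_eq_right hlog, min_eq_right hc1, Real.rpow_def_of_pos hc]
    ring_nf
  · have hlog : -Real.log c / k ≤ 0 :=
      div_nonpos_of_nonpos_of_nonneg (neg_nonpos.mpr (Real.log_nonneg hc1)) hk.le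
    simp only [max_eq_left hlog, min_eq_left hc1, mul_zero, neg_zero, Real.exp_zero, Real.one_rpow]

end ExponentialLoss

section PositiveFactor

variable {μ : Measure ℝ}

lemma prod_setOf_mul_lt {ρ : Measure ℝ} [SFinite ρ] (hμ : ∀ᵐ x ∂μ, 0 < x) (ν : ℝ) :
    μ.prod ρ {p | p.1 * p.2 < ν} = ∫⁻ x, ρ (Iio (ν / x)) ∂μ := by
  rw [Measure.prod_apply (measurableSet_lt (by fun_prop) (by fun_prop))]
  refine lintegral_congr_ae ?_
  filter_upwards [hμ] with x hx
  congr 1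
  ext u
  exact (lt_div_iff₀' hx).symm

lemma lintegral_min_one_div_rpow (hμ : ∀ᵐ x ∂μ, 0 < x) {ν : ℝ} (hν : 0 < ν) (q : ℝ) :
    ∫⁻ x, ENNReal.ofReal (min 1 (ν / x) ^ q) ∂μ =
      μ (Iic ν) + ENNReal.ofReal (ν ^ q) * ∫⁻ x in Ioi ν, ENNReal.ofReal (x ^ (-q)) ∂μ := by
  rw [← lintegral_add_compl _ (measurableSet_Iic (a := ν)), compl_Iic,
    ← setLIntegral_one, ← lintegral_const_mul' _ _ ENNReal.ofReal_ne_top]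
  congr 1
  · refine lintegral_congr_ae ?_
    filter_upwards [ae_restrict_mem measurableSet_Iic, ae_restrict_of_ae hμ] with x hxν hx
    rw [min_eq_left ((one_le_div hx).mpr hxν), Real.one_rpow, ENNReal.ofReal_one]
  · refine setLIntegral_congr_fun measurableSet_Ioi fun x hxν => ?_
    have hx : 0 < x := hν.trans hxν
    rw [min_eq_right ((div_le_one hx).mpr hxν.le), Real.div_rpow hν.le hx.le, div_eq_mul_inv,
      ← Real.rpow_neg hx.le, ENNReal.ofReal_mul (by positivity)]

end PositiveFactor

theorem outage_probability_closed_form_general {a r l k ν : ℝ} (ha : 0 < a) (hr : 0 < r)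
    (hl : 0 < l) (hk : 0 < k) (hν : 0 < ν) :
    ((gammaMeasure a r).prod
        (Measure.map (fun x : ℝ => Real.exp (-(k * x))) (expMeasure l)))
        {p : ℝ × ℝ | p.1 * p.2 < ν} =
      ENNReal.ofReal ((1 / Real.Gamma a) *
        (lowerIncGamma a (r * ν) +
          (r * ν) ^ (l / k) * upperIncGamma (a - l / k) (r * ν))) := by
  have := isProbabilityMeasure_expMeasure hl
  have hpos := ae_pos_gammaMeasure a r
  have hlower := lowerIncGamma_nonneg a (mul_pos hr hν).le
  have hupper := upperIncGamma_nonneg (a - l / k) (mul_pos hr hν).le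
  calc
    _ = ∫⁻ x, ENNReal.ofReal (min 1 (ν / x) ^ (l / k)) ∂gammaMeasure a r := by
      rw [prod_setOf_mul_lt hpos]
      refine lintegral_congr_ae ?_
      filter_upwards [hpos] with x hx
      exact map_exp_neg_mul_expMeasure_Iio hl hk (div_pos hν hx)
    _ = gammaMeasure a r (Iic ν) + ENNReal.ofReal (ν ^ (l / k)) *
          ∫⁻ x in Ioi ν, ENNReal.ofReal (x ^ (-(l / k))) ∂gammaMeasure a r :=
      lintegral_min_one_div_rpow hpos hν _
    _ = _ := by
      rw [gammaMeasure_Iic ha hr hν.le, setLIntegral_Ioi_rpow_gammaMeasure ha hr _ hν, neg_neg,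
        ← sub_eq_add_neg, ← ENNReal.ofReal_mul (by positivity),
        ← ENNReal.ofReal_add (by positivity) (by positivity), Real.mul_rpow hr.le hν.le]
      ring_nf

/-- Proposition 2 of the paper, in probabilistic form: if `hₐ` is unit-mean Gamma with
shape `m` and rate `m`, and `h_p = exp(-k·R)` with `R` exponential of rate `l`, independent
of `hₐ`, then with `q = l/k` the outage probability `Pr[hₐ · h_p < ν]` equals
`(1/Γ(m)) [γ(m, mν) + (mν)^q Γ(m-q, mν)]`. -/
theorem outage_probability_closed_form (m l k ν : ℝ) (hm : 0 < m) (hl : 0 < l)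
    (hk : 0 < k) (hν : 0 < ν) :
    ((gammaMeasure m m).prod
        (Measure.map (fun x : ℝ => Real.exp (-(k * x))) (expMeasure l)))
        {p : ℝ × ℝ | p.1 * p.2 < ν} =
      ENNReal.ofReal ((1 / Real.Gamma m) *
        (lowerIncGamma m (m * ν) +
          (m * ν) ^ (l / k) * upperIncGamma (m - l / k) (m * ν))) :=
  outage_probability_closed_form_general hm hm hl hk hν
end

section
/- Let m > 0, λ > 0, k > 0, ν > 0, and set q = λ/k. Let μₐ be the Gamma distribution on ℝ with shape m and rate m, and let μ_p be the pushforward of the exponential distribution with rate λ under the map x ↦ exp(−k·x). Then the product measure μₐ × μ_p assigns to the event {(x,u) : x·u < ν} the probability q · ∫₀¹ [γ(m, m·ν/u)/Γ(m)] · u^(q−1) du, where γ(a,y) = ∫₀^y t^(a−1) e^(−t) dt is the lower incomplete gamma function and Γ is the Gamma function. -/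
open MeasureTheory ProbabilityTheory Real Set

/-!
Conditionally on `h_p = u > 0` the outage event is `hₐ < ν / u`, whose probability is the Gamma
distribution function at `ν / u`; it remains to average over `u`. The change of variables
`u = exp (-k x)` turns `l exp (-l x) dx` on `[0, ∞)` into `(l / k) u ^ (l / k - 1) du` on `(0, 1]`.
-/

theorem measureReal_prod_setOf_mul_lt (μ ρ : Measure ℝ) [IsFiniteMeasure μ] [SFinite ρ]
    (hρ : ∀ᵐ u ∂ρ, 0 < u) (c : ℝ) :
    (μ.prod ρ).real {p : ℝ × ℝ | p.1 * p.2 < c} = ∫ u, μ.real (Iio (c / u)) ∂ρ := by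
  have hS : MeasurableSet {p : ℝ × ℝ | p.1 * p.2 < c} :=
    measurableSet_lt (by fun_prop) (by fun_prop)
  rw [measureReal_def, Measure.prod_apply_symm hS,
    ← integral_toReal (measurable_measure_prodMk_right hS).aemeasurable
      (ae_of_all _ fun _ ↦ measure_lt_top _ _)]
  refine integral_congr_ae ?_
  filter_upwards [hρ] with u hu
  have slice : (fun x ↦ (x, u)) ⁻¹' {p : ℝ × ℝ | p.1 * p.2 < c} = Iio (c / u) := by
    ext x
    exact (lt_div_iff₀ hu).symm
  rw [slice, measureReal_def]

theorem map_withDensity_abs_deriv_mul {s : Set ℝ} {f f' : ℝ → ℝ} (hs : MeasurableSet s)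
    (hf : Measurable f) (hf' : ∀ x ∈ s, HasDerivWithinAt f (f' x) s x) (hinj : InjOn f s)
    (g : ℝ → ENNReal) :
    Measure.map f ((volume.restrict s).withDensity fun x ↦ ENNReal.ofReal |f' x| * g (f x)) =
      (volume.restrict (f '' s)).withDensity g := by
  ext t ht
  have hst : MeasurableSet (f ⁻¹' t ∩ s) := (hf ht).inter hs
  rw [Measure.map_apply hf ht, withDensity_apply _ (hf ht), withDensity_apply _ ht,
    Measure.restrict_restrict (hf ht), Measure.restrict_restrict ht, ← image_preimage_inter,
    lintegral_image_eq_lintegral_abs_deriv_mul hst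
      (fun x hx ↦ (hf' x hx.2).mono inter_subset_right) (hinj.mono inter_subset_right)]

theorem gammaPDFReal_eq_indicator (a r : ℝ) :
    gammaPDFReal a r =
      (Ici 0).indicator fun x ↦ r ^ a / Gamma a * x ^ (a - 1) * exp (-(r * x)) := by
  ext x
  simp only [gammaPDFReal, indicator_apply, mem_Ici]

theorem integral_rpow_mul_exp_neg_mul_eq_lowerIncGamma {a r x : ℝ} (hr : 0 < r) (hx : 0 ≤ x) :
    ∫ t in (0 : ℝ)..x, t ^ (a - 1) * exp (-(r * t)) = lowerIncGamma a (r * x) / r ^ a := by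
  have rescale : ∀ t ∈ uIcc 0 x, t ^ (a - 1) * exp (-(r * t)) =
      (r ^ (a - 1))⁻¹ * ((r * t) ^ (a - 1) * exp (-(r * t))) := by
    intro t ht
    rw [uIcc_of_le hx] at ht
    rw [mul_rpow hr.le ht.1]
    field_simp
  rw [intervalIntegral.integral_congr rescale, intervalIntegral.integral_const_mul,
    intervalIntegral.integral_comp_mul_left (fun t ↦ t ^ (a - 1) * exp (-t)) hr.ne', mul_zero,
    ← lowerIncGamma, smul_eq_mul, rpow_sub_one hr.ne']
  field_simp

theorem gammaMeasure_real_Iio {a r x : ℝ} (ha : 0 < a) (hr : 0 < r) (hx : 0 ≤ x) :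
    (gammaMeasure a r).real (Iio x) = lowerIncGamma a (r * x) / Gamma a := by
  have := isProbabilityMeasure_gammaMeasure ha hr
  have : NullSingletonClass (gammaMeasure a r) := nullSingletonClass_withDensity _
  calc (gammaMeasure a r).real (Iio x)
    _ = cdf (gammaMeasure a r) x := by rw [cdf_eq_real, measureReal_congr Iio_ae_eq_Iic]
    _ = ∫ t in (0 : ℝ)..x, r ^ a / Gamma a * t ^ (a - 1) * exp (-(r * t)) := by
      rw [cdf_gammaMeasure_eq_integral ha hr, gammaPDFReal_eq_indicator,
        setIntegral_indicator measurableSet_Ici, inter_comm, Ici_inter_Iic,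
        integral_Icc_eq_integral_Ioc, intervalIntegral.integral_of_le hx]
    _ = lowerIncGamma a (r * x) / Gamma a := by
      simp_rw [mul_assoc (r ^ a / Gamma a)]
      rw [intervalIntegral.integral_const_mul,
        integral_rpow_mul_exp_neg_mul_eq_lowerIncGamma hr hx]
      field_simp

theorem expMeasure_eq_withDensity_restrict_Ici (l : ℝ) :
    expMeasure l =
      (volume.restrict (Ici 0)).withDensity fun x ↦ ENNReal.ofReal (l * exp (-(l * x))) := by
  rw [← withDensity_indicator measurableSet_Ici]
  change volume.withDensity (exponentialPDF l) = _
  congr 1 with x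
  rw [exponentialPDF_eq, indicator_apply]
  simp only [mem_Ici, apply_ite ENNReal.ofReal, ENNReal.ofReal_zero]

theorem image_exp_neg_mul_Ici {k : ℝ} (hk : 0 < k) :
    (fun x ↦ exp (-(k * x))) '' Ici 0 = Ioc 0 1 := by
  ext u
  constructor
  · rintro ⟨x, hx : 0 ≤ x, rfl⟩
    exact ⟨exp_pos _, exp_le_one_iff.mpr (neg_nonpos.mpr (by positivity))⟩
  · rintro ⟨hu₀, hu₁⟩
    refine ⟨-log u / k, div_nonneg (neg_nonneg.mpr (log_nonpos hu₀.le hu₁)) hk.le, ?_⟩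
    simp only [mul_div_cancel₀ _ hk.ne', neg_neg, exp_log hu₀]

theorem map_exp_neg_mul_expMeasure (l : ℝ) {k : ℝ} (hk : 0 < k) :
    Measure.map (fun x ↦ exp (-(k * x))) (expMeasure l) =
      (volume.restrict (Ioc 0 1)).withDensity
        fun u ↦ ENNReal.ofReal (l / k * u ^ (l / k - 1)) := by
  have hderiv (x : ℝ) : HasDerivAt (fun x ↦ exp (-(k * x))) (-(k * exp (-(k * x)))) x := by
    simpa only [neg_neg] using (hasDerivAt_neg_exp_mul_exp (r := k) (x := x)).fun_neg
  have hinj : Function.Injective fun x ↦ exp (-(k * x)) :=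
    exp_injective.comp (neg_injective.comp (mul_right_injective₀ hk.ne'))
  have hdensity (x : ℝ) : l * exp (-(l * x)) =
      |-(k * exp (-(k * x)))| * (l / k * exp (-(k * x)) ^ (l / k - 1)) := by
    have hpow : exp (-(k * x)) * exp (-(k * x)) ^ (l / k - 1) = exp (-(l * x)) := by
      rw [← exp_mul, ← exp_add]
      congr 1
      field_simp
      ring
    rw [abs_neg, abs_of_pos (by positivity), ← hpow]
    field_simp
  rw [← image_exp_neg_mul_Ici hk, ← map_withDensity_abs_deriv_mul measurableSet_Ici
      (by fun_prop) (fun x _ ↦ (hderiv x).hasDerivWithinAt) hinj.injOn,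
    expMeasure_eq_withDensity_restrict_Ici]
  simp_rw [hdensity, ENNReal.ofReal_mul (abs_nonneg _)]

theorem outage_probability_integral_form_general (a r l k ν : ℝ) (ha : 0 < a) (hr : 0 < r)
    (hl : 0 < l) (hk : 0 < k) (hν : 0 ≤ ν) :
    ((gammaMeasure a r).prod
        (Measure.map (fun x : ℝ => Real.exp (-(k * x))) (expMeasure l)))
        {p : ℝ × ℝ | p.1 * p.2 < ν} =
      ENNReal.ofReal ((l / k) *
        ∫ u in Ioc (0:ℝ) 1,
          (lowerIncGamma a (r * ν / u) / Real.Gamma a) * u ^ (l / k - 1)) := by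
  have := isProbabilityMeasure_gammaMeasure ha hr
  have := isProbabilityMeasure_expMeasure hl
  have hmeas : Measurable fun x : ℝ ↦ exp (-(k * x)) := by fun_prop
  have hpos : ∀ᵐ u ∂Measure.map (fun x ↦ exp (-(k * x))) (expMeasure l), 0 < u :=
    (ae_map_iff hmeas.aemeasurable measurableSet_Ioi).mpr (ae_of_all _ fun _ ↦ exp_pos _)
  rw [← ofReal_measureReal, measureReal_prod_setOf_mul_lt _ _ hpos,
    map_exp_neg_mul_expMeasure l hk,
    integral_withDensity_eq_integral_toReal_smul (by fun_prop)
      (ae_of_all _ fun _ ↦ ENNReal.ofReal_lt_top), ← integral_const_mul]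
  congr 1
  refine setIntegral_congr_fun measurableSet_Ioc fun u ⟨hu, _⟩ ↦ ?_
  rw [gammaMeasure_real_Iio ha hr (by positivity), ENNReal.toReal_ofReal (by positivity),
    smul_eq_mul, mul_div_assoc r]
  ring

/-- Eq. (25) of the paper: if `hₐ` is unit-mean Gamma with shape `m` and rate `m`, and
`h_p = exp(-k·R)` with `R` exponential of rate `l`, independent of `hₐ`, then with
`q = l/k` the outage probability `Pr[hₐ · h_p < ν]` equals
`q ∫₀¹ [γ(m, mν/u)/Γ(m)] u^(q-1) du`. -/
theorem outage_probability_integral_form (m l k ν : ℝ) (hm : 0 < m) (hl : 0 < l)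
    (hk : 0 < k) (hν : 0 < ν) :
    ((gammaMeasure m m).prod
        (Measure.map (fun x : ℝ => Real.exp (-(k * x))) (expMeasure l)))
        {p : ℝ × ℝ | p.1 * p.2 < ν} =
      ENNReal.ofReal ((l / k) *
        ∫ u in Ioc (0:ℝ) 1,
          (lowerIncGamma m (m * ν / u) / Real.Gamma m) * u ^ (l / k - 1)) :=
  outage_probability_integral_form_general m m l k ν hm hm hl hk hν.le
end
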